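/- arXiv:1312.7614 — 3 statements merged into one kernel-verified Lean document; each statement's English description precedes it below -/
import Mathlib

section
/- Let r > 0 and α ∈ (0,1). For any (possibly randomized) test φ_n : (ℝ^p)^n → [0,1] such that E_μ[φ_n(X_1,…,X_n)] ≤ α for all μ ∈ ℝ^p with max_{1≤j≤p} μ_j ≤ 0, one has inf over all μ with max_{1≤j≤p}(μ_j/σ_j) ≥ r of E_μ[φ_n(X_1,…,X_n)] ≤ α + E[| p⁻¹ Σ_{j=1}^p exp(√n·r·ξ_j − n·r²/2) − 1 |], where ξ_1,…,ξ_p are i.i.d. standard normal random variables. -/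
/-!
The infimum of the power over the alternative is at most the average power over the `p`
one-sparse alternatives `μ^(j) = r σ_j e_j`. By the Gaussian likelihood ratio
(`gaussSample_eq_withDensity`), the law of the sample under `μ^(j)` has density
`exp (√n r T_j - n r² / 2)` with respect to the law `P₀` under `μ = 0`, where
`T_j = n^{-1/2} Σ_i x_{ij} / σ_j`. Hence the average power equals `E₀ φ + E₀ [φ (L - 1)]`, with `L`
the average of these densities. As `0 ≤ φ ≤ 1` and `φ` has level `α` at `μ = 0`, this is at most
`α + E₀ |L - 1|`. Under `P₀` the statistics `T_1, …, T_p` are i.i.d. standard normal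
(`gaussSample_map_normalized`, by characteristic functions), which identifies the last expectation.
-/

open MeasureTheory ProbabilityTheory
open scoped ENNReal NNReal BigOperators

noncomputable section

namespace ManyMoment

/-- Joint law of `n` i.i.d. `N(μ, diag(σ²))` random vectors in `ℝ^p`. -/
def gaussSample (n p : ℕ) (μ : Fin p → ℝ) (σ : Fin p → ℝ) :
    Measure (Fin n → Fin p → ℝ) :=
  Measure.pi fun _ => Measure.pi fun j => gaussianReal (μ j) (Real.toNNReal ((σ j) ^ 2))

instance (n p : ℕ) (μ σ : Fin p → ℝ) : IsProbabilityMeasure (gaussSample n p μ σ) := by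
  unfold gaussSample; infer_instance

/-- Densities multiply over finite products of probability measures. -/
lemma pi_withDensity_prod {ι : Type*} [Fintype ι] {X : ι → Type*} [∀ i, MeasurableSpace (X i)]
    (μ : ∀ i, Measure (X i)) [∀ i, IsProbabilityMeasure (μ i)] (f : ∀ i, X i → ℝ≥0∞)
    (hf : ∀ i, Measurable (f i)) [∀ i, SigmaFinite ((μ i).withDensity (f i))] :
    Measure.pi (fun i => (μ i).withDensity (f i)) =
      (Measure.pi μ).withDensity (fun x => ∏ i, f i (x i)) := by
  refine Measure.pi_eq fun s hs => ?_
  rw [withDensity_apply _ (MeasurableSet.univ_pi hs),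
    ← lintegral_indicator (MeasurableSet.univ_pi hs)]
  have h1 : (Set.univ.pi s).indicator (fun x => ∏ i, f i (x i)) =
      fun x => ∏ i, (s i).indicator (f i) (x i) := by
    classical
    funext x
    by_cases hx : x ∈ Set.univ.pi s
    · rw [Set.indicator_of_mem hx]
      refine Finset.prod_congr rfl fun i _ => ?_
      rw [Set.indicator_of_mem (hx i (Set.mem_univ i))]
    · rw [Set.indicator_of_notMem hx]
      simp only [Set.mem_pi, Set.mem_univ, forall_true_left, not_forall] at hx
      obtain ⟨i, hi⟩ := hx
      exact (Finset.prod_eq_zero (Finset.mem_univ i) (Set.indicator_of_notMem hi _)).symm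
  have hm : ∀ i, Measurable ((s i).indicator (f i)) := fun i => (hf i).indicator (hs i)
  rw [h1, lintegral_prod_eq_prod_lintegral_of_indepFun Finset.univ
    (fun i (x : ∀ i, X i) => (s i).indicator (f i) (x i))
    (iIndepFun_pi (X := fun i => (s i).indicator (f i)) fun i => (hm i).aemeasurable)
    (fun i => (hm i).comp (measurable_pi_apply i))]
  refine Finset.prod_congr rfl fun i _ => ?_
  rw [withDensity_apply _ (hs i), ← lintegral_indicator (hs i)]
  exact (measurePreserving_eval μ i).lintegral_comp (hm i)

lemma gaussianReal_eq_withDensity (m : ℝ) {v : ℝ≥0} (hv : v ≠ 0) :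
    gaussianReal m v = (gaussianReal 0 v).withDensity
      (fun x => ENNReal.ofReal (Real.exp ((m * x - m ^ 2 / 2) / v))) := by
  rw [gaussianReal_of_var_ne_zero _ hv, gaussianReal_of_var_ne_zero _ hv,
    ← withDensity_mul _ (measurable_gaussianPDF 0 v) (by fun_prop)]
  congr 1
  funext x
  have hv' : (v : ℝ) ≠ 0 := by exact_mod_cast hv
  rw [Pi.mul_apply, gaussianPDF, gaussianPDF, ← ENNReal.ofReal_mul (gaussianPDFReal_nonneg _ _ _),
    gaussianPDFReal, gaussianPDFReal, mul_assoc _ (Real.exp _), ← Real.exp_add]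
  congr 3
  field_simp
  ring

/-- The likelihood ratio of the whole sample between the means `μ` and `0`. -/
lemma gaussSample_eq_withDensity (n p : ℕ) (μ σ : Fin p → ℝ) (hσ : ∀ j, 0 < σ j) :
    gaussSample n p μ σ = (gaussSample n p 0 σ).withDensity
      (fun x => ENNReal.ofReal
        (Real.exp (∑ i, ∑ j, (μ j * x i j - μ j ^ 2 / 2) / σ j ^ 2))) := by
  have hv : ∀ j, Real.toNNReal (σ j ^ 2) ≠ 0 := fun j => by
    simpa using (hσ j).ne'
  let f : Fin p → ℝ → ℝ≥0∞ := fun j x =>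
    ENNReal.ofReal (Real.exp ((μ j * x - μ j ^ 2 / 2) / (Real.toNNReal (σ j ^ 2))))
  have h1 : ∀ j, gaussianReal (μ j) (Real.toNNReal (σ j ^ 2)) =
      (gaussianReal 0 (Real.toNNReal (σ j ^ 2))).withDensity (f j) :=
    fun j => gaussianReal_eq_withDensity _ (hv j)
  have hf : ∀ j, Measurable (f j) := fun j => by fun_prop
  have : ∀ j, IsProbabilityMeasure
      ((gaussianReal 0 (Real.toNNReal (σ j ^ 2))).withDensity (f j)) := fun j => by
    rw [← h1 j]; infer_instance
  have h2 : Measure.pi (fun j => gaussianReal (μ j) (Real.toNNReal (σ j ^ 2))) =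
      (Measure.pi fun j => gaussianReal 0 (Real.toNNReal (σ j ^ 2))).withDensity
        (fun x => ∏ j, f j (x j)) := by
    rw [← pi_withDensity_prod _ f hf]
    congr 1
    funext j
    exact h1 j
  have : IsProbabilityMeasure
      ((Measure.pi fun j => gaussianReal 0 (Real.toNNReal (σ j ^ 2))).withDensity
        (fun x => ∏ j, f j (x j))) := by
    rw [← h2]; infer_instance
  unfold gaussSample
  rw [h2, pi_withDensity_prod
    (fun _ : Fin n => Measure.pi fun j => gaussianReal 0 (Real.toNNReal (σ j ^ 2)))
    (fun _ x => ∏ j, f j (x j)) (fun _ => by fun_prop)]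
  congr 1
  funext x
  rw [Real.exp_sum, ENNReal.ofReal_prod_of_nonneg fun i _ => (Real.exp_pos _).le]
  refine Finset.prod_congr rfl fun i _ => ?_
  rw [Real.exp_sum, ENNReal.ofReal_prod_of_nonneg fun i _ => (Real.exp_pos _).le]
  refine Finset.prod_congr rfl fun j _ => ?_
  simp only [f]
  rw [Real.coe_toNNReal _ (sq_nonneg _)]

/-- Under mean zero, the standardized coordinate means `√n x̄_j / σ_j` are i.i.d. standard normal. -/
lemma gaussSample_map_normalized (n p : ℕ) (hn : 1 ≤ n) (σ : Fin p → ℝ) (hσ : ∀ j, 0 < σ j) :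
    (gaussSample n p 0 σ).map (fun x j => (∑ i, x i j / σ j) / Real.sqrt n) =
      Measure.pi fun _ : Fin p => gaussianReal 0 1 := by
  have hn0 : (0 : ℝ) < n := by exact_mod_cast hn
  have hT : Measurable (fun (x : Fin n → Fin p → ℝ) j => (∑ i, x i j / σ j) / Real.sqrt n) := by
    fun_prop
  have : IsProbabilityMeasure ((gaussSample n p 0 σ).map
      (fun x j => (∑ i, x i j / σ j) / Real.sqrt n)) :=
    Measure.isProbabilityMeasure_map hT.aemeasurable
  refine (charFun_eq_pi_iff (μ := fun _ : Fin p => gaussianReal 0 1)).mp fun t => ?_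
  rw [Measure.map_map (by fun_prop) hT, charFun_apply,
    integral_map (Measurable.aemeasurable (by fun_prop)) (by fun_prop)]
  -- The character factors over all the entries `x i j`.
  have h1 : ∀ x : Fin n → Fin p → ℝ,
      Complex.exp (((inner ℝ ((WithLp.toLp 2 ∘
        fun (x : Fin n → Fin p → ℝ) j => (∑ i, x i j / σ j) / Real.sqrt n) x) t : ℝ) : ℂ)
          * Complex.I) =
      ∏ i, ∏ j, Complex.exp (((t j / (σ j * Real.sqrt n) : ℝ) : ℂ) * (x i j : ℂ) * Complex.I) := by
    intro x
    simp_rw [← Complex.exp_sum]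
    congr 1
    rw [Finset.sum_comm, PiLp.inner_apply]
    push_cast
    rw [Finset.sum_mul]
    refine Finset.sum_congr rfl fun j _ => ?_
    simp only [Function.comp_apply, RCLike.inner_apply, conj_trivial]
    push_cast
    rw [← Finset.sum_mul, ← Finset.mul_sum, ← Finset.sum_div]
    field_simp
  simp_rw [h1]
  unfold gaussSample
  rw [integral_fintype_prod_eq_prod (fun (_ : Fin n) (y : Fin p → ℝ) =>
    ∏ j, Complex.exp (((t j / (σ j * Real.sqrt n) : ℝ) : ℂ) * (y j : ℂ) * Complex.I))]
  simp_rw [integral_fintype_prod_eq_prod (fun (j : Fin p) (y : ℝ) =>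
    Complex.exp (((t j / (σ j * Real.sqrt n) : ℝ) : ℂ) * (y : ℂ) * Complex.I))]
  rw [Finset.prod_comm]
  refine Finset.prod_congr rfl fun j _ => ?_
  rw [← charFun_apply_real, charFun_gaussianReal, charFun_gaussianReal, Finset.prod_const,
    Finset.card_univ, Fintype.card_fin, ← Complex.exp_nat_mul]
  congr 1
  have hs : (σ j : ℂ) ≠ 0 := by exact_mod_cast (hσ j).ne'
  have hn1 : (n : ℂ) ≠ 0 := by exact_mod_cast hn0.ne'
  have hq : ((Real.sqrt n : ℝ) : ℂ) ^ 2 = n := by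
    exact_mod_cast Real.sq_sqrt hn0.le
  have hc : (((Real.toNNReal (σ j ^ 2) : ℝ≥0) : ℝ) : ℂ) = (σ j : ℂ) ^ 2 := by
    rw [Real.coe_toNNReal _ (sq_nonneg _)]; push_cast; rfl
  rw [hc]
  push_cast
  rw [div_pow, mul_pow, hq]
  simp only [Pi.zero_apply, Complex.ofReal_zero, mul_zero, zero_mul]
  field_simp
  simp

/-- Lemma 5.1, upper bound on power: if a (possibly randomized) test
`φ : (ℝ^p)^n → [0,1]` has level `α` over all `μ` with `max_j μ_j ≤ 0`, then its infimum
power over alternatives `max_j (μ_j/σ_j) ≥ r` is at most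
`α + E|p⁻¹ Σ_j exp(√n r ξ_j - n r²/2) - 1|`, `ξ_1,…,ξ_p` i.i.d. standard normal. -/
theorem statement7 :
    ∀ (n p : ℕ), 1 ≤ n → 1 ≤ p →
    ∀ σ : Fin p → ℝ, (∀ j, 0 < σ j) →
    ∀ r α : ℝ, 0 < r → 0 < α → α < 1 →
    ∀ φ : (Fin n → Fin p → ℝ) → ℝ,
    Measurable φ → (∀ x, 0 ≤ φ x) → (∀ x, φ x ≤ 1) →
    (∀ μ : Fin p → ℝ, (∀ j, μ j ≤ 0) → ∫ x, φ x ∂(gaussSample n p μ σ) ≤ α) →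
    sInf {v : ℝ | ∃ μ : Fin p → ℝ,
        r ≤ (⨆ j, μ j / σ j) ∧ v = ∫ x, φ x ∂(gaussSample n p μ σ)} ≤
      α + ∫ ξ, |(p : ℝ)⁻¹ * ∑ j, Real.exp (Real.sqrt n * r * ξ j - n * r ^ 2 / 2) - 1|
            ∂(Measure.pi fun _ : Fin p => gaussianReal 0 1) := by
  intro n p hn hp σ hσ r α hr hα hα1 φ hφ hφ0 hφ1 hlevel
  have hn0 : (0 : ℝ) < n := by exact_mod_cast hn
  have hp0 : (0 : ℝ) < p := by exact_mod_cast hp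
  have hsq : Real.sqrt n ≠ 0 := (Real.sqrt_pos.mpr hn0).ne'
  let T : (Fin n → Fin p → ℝ) → Fin p → ℝ := fun x j => (∑ i, x i j / σ j) / Real.sqrt n
  let L : Fin p → (Fin n → Fin p → ℝ) → ℝ := fun j x =>
    Real.exp (Real.sqrt n * r * T x j - n * r ^ 2 / 2)
  let ν : Fin p → Fin p → ℝ := fun j => Pi.single j (r * σ j)
  let P := gaussSample n p 0 σ
  have hT : Measurable T := by fun_prop
  have hL : ∀ j, Measurable (L j) := fun j => by fun_prop
  have hdens : ∀ j, gaussSample n p (ν j) σ = P.withDensity (fun x => ENNReal.ofReal (L j x)) := by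
    intro j
    rw [gaussSample_eq_withDensity n p (ν j) σ hσ]
    congr 1
    funext x
    congr 2
    have h0 : ∀ i, ∑ k, (ν j k * x i k - ν j k ^ 2 / 2) / σ k ^ 2 =
        r * (x i j / σ j) - r ^ 2 / 2 := by
      intro i
      rw [Finset.sum_eq_single j]
      · simp only [ν, Pi.single_eq_same]
        have := (hσ j).ne'
        field_simp
      · intro k _ hk
        simp [ν, Pi.single_eq_of_ne hk]
      · simp
    simp_rw [h0]
    rw [Finset.sum_sub_distrib, ← Finset.mul_sum]
    simp only [T, Finset.sum_const, Finset.card_univ, Fintype.card_fin, nsmul_eq_mul]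
    field_simp
  have hLint : ∀ j, Integrable (L j) P := by
    intro j
    refine ⟨(hL j).aestronglyMeasurable, ?_⟩
    rw [hasFiniteIntegral_iff_ofReal (ae_of_all _ fun x => (Real.exp_pos _).le)]
    have h1 : (P.withDensity (fun x => ENNReal.ofReal (L j x))) Set.univ = 1 := by
      rw [← hdens j]; exact measure_univ
    rw [withDensity_apply _ MeasurableSet.univ, Measure.restrict_univ] at h1
    rw [h1]
    exact ENNReal.one_lt_top
  have hpow : ∀ j, ∫ x, φ x ∂(gaussSample n p (ν j) σ) = ∫ x, L j x * φ x ∂P := by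
    intro j
    rw [hdens j, integral_withDensity_eq_integral_toReal_smul (hL j).ennreal_ofReal
      (ae_of_all _ fun x => ENNReal.ofReal_lt_top)]
    refine integral_congr_ae (ae_of_all _ fun x => ?_)
    simp only [smul_eq_mul]
    rw [ENNReal.toReal_ofReal (Real.exp_pos _).le]
  have hLφ : ∀ j, Integrable (fun x => L j x * φ x) P := fun j =>
    (hLint j).mul_bdd (c := 1) hφ.aestronglyMeasurable
      (ae_of_all _ fun x => by rw [Real.norm_of_nonneg (hφ0 x)]; exact hφ1 x)
  have hφint : Integrable φ P :=
    Integrable.of_bound hφ.aestronglyMeasurable 1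
      (ae_of_all _ fun x => by rw [Real.norm_of_nonneg (hφ0 x)]; exact hφ1 x)
  set S := {v : ℝ | ∃ μ : Fin p → ℝ,
        r ≤ (⨆ j, μ j / σ j) ∧ v = ∫ x, φ x ∂(gaussSample n p μ σ)} with hS
  have hbdd : BddBelow S := by
    refine ⟨0, ?_⟩
    rintro v ⟨μ, -, rfl⟩
    exact integral_nonneg hφ0
  have hinf : ∀ j, sInf S ≤ ∫ x, L j x * φ x ∂P := by
    intro j
    refine csInf_le hbdd ⟨ν j, ?_, (hpow j).symm⟩
    refine le_trans ?_ (le_ciSup (Set.finite_range fun k => ν j k / σ k).bddAbove j)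
    simp [ν, (hσ j).ne']
  have havg : sInf S ≤ ∫ x, ((p : ℝ)⁻¹ * ∑ j, L j x) * φ x ∂P := by
    have h1 : ∫ x, ((p : ℝ)⁻¹ * ∑ j, L j x) * φ x ∂P =
        (p : ℝ)⁻¹ * ∑ j, ∫ x, L j x * φ x ∂P := by
      rw [← integral_finsetSum _ fun j _ => hLφ j, ← integral_const_mul]
      refine integral_congr_ae (ae_of_all _ fun x => ?_)
      simp only [mul_assoc, Finset.sum_mul]
    rw [h1, inv_mul_eq_div, le_div_iff₀ hp0]
    have h2 := Finset.sum_le_sum fun j (_ : j ∈ Finset.univ) => hinf j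
    simp only [Finset.sum_const, Finset.card_univ, Fintype.card_fin, nsmul_eq_mul] at h2
    linarith
  have hAint : Integrable (fun x => (p : ℝ)⁻¹ * ∑ j, L j x - 1) P :=
    ((integrable_finsetSum _ fun j _ => hLint j).const_mul _).sub (integrable_const _)
  have hle : ∫ x, ((p : ℝ)⁻¹ * ∑ j, L j x) * φ x ∂P ≤
      ∫ x, (φ x + |(p : ℝ)⁻¹ * ∑ j, L j x - 1|) ∂P := by
    refine integral_mono_of_nonneg (ae_of_all _ fun x => ?_) (hφint.add hAint.abs)
      (ae_of_all _ fun x => ?_)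
    · exact mul_nonneg (mul_nonneg (inv_nonneg.mpr hp0.le)
        (Finset.sum_nonneg fun j _ => (Real.exp_pos _).le)) (hφ0 x)
    · have h1 : ((p : ℝ)⁻¹ * ∑ j, L j x - 1) * φ x ≤ |(p : ℝ)⁻¹ * ∑ j, L j x - 1| :=
        (mul_le_mul_of_nonneg_right (le_abs_self _) (hφ0 x)).trans
          (mul_le_of_le_one_right (abs_nonneg _) (hφ1 x))
      simp only
      linarith
  rw [integral_add hφint hAint.abs] at hle
  have hmap : ∫ ξ, |(p : ℝ)⁻¹ * ∑ j, Real.exp (Real.sqrt n * r * ξ j - n * r ^ 2 / 2) - 1|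
      ∂(Measure.pi fun _ : Fin p => gaussianReal 0 1) =
      ∫ x, |(p : ℝ)⁻¹ * ∑ j, L j x - 1| ∂P := by
    rw [← gaussSample_map_normalized n p hn σ hσ, integral_map hT.aemeasurable
      (Measurable.aestronglyMeasurable (by fun_prop))]
  rw [hmap]
  have := hlevel 0 fun _ => le_rfl
  exact havg.trans (hle.trans (by gcongr))

end ManyMoment
end
end

section
/- Let p_n → ∞ as n → ∞, and let ε_n > 0 be any sequence with ε_n → 0 and ε_n·√(log p_n) → ∞. Set r̲_n := (1 − ε_n)·√(2·(log p_n)/n). Then E[| p_n⁻¹ Σ_{j=1}^{p_n} exp(√n·r̲_n·ξ_j − n·r̲_n²/2) − 1 |] → 0 as n → ∞, where ξ_1,…,ξ_{p_n} are i.i.d. standard normal random variables. -/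
/-!
For `n ≥ 1` the exponent is `a ξ_j - a² / 2` with `a = (1 - ε_n) t`, `t = √(2 log p_n)`, so the
summands `f (ξ_j)` are i.i.d. with mean `1`. Their second moment `exp (a²)` is too large for a
direct variance bound, so `f` is truncated at the level `ξ_j ≤ t`.

* The discarded part has mean at most `exp (-(t - a)² / 2)` (exponential tilting by `t - a`).
* The truncated part has second moment at most `p_n exp (-(t - a)²)` (tilting by `2 a - t ≥ 0`),
  so the average of `p_n` centred copies has `L¹` norm at most `exp (-(t - a)² / 2)`.

Altogether (`integral_abs_mean_exp_sub_one_le`) the expectation is at most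
`3 exp (-(t - a)² / 2)`, and `t - a = ε_n √(2 log p_n) → ∞`.
-/

open MeasureTheory ProbabilityTheory Filter
open scoped ENNReal NNReal BigOperators

noncomputable section

namespace ManyMoment

lemma integral_abs_le_sqrt {Ω : Type*} [MeasurableSpace Ω] {μ : Measure Ω}
    [IsProbabilityMeasure μ] {X : Ω → ℝ} (hX : MemLp X 2 μ) :
    ∫ ω, |X ω| ∂μ ≤ Real.sqrt (∫ ω, X ω ^ 2 ∂μ) := by
  have h1 := variance_eq_sub (μ := μ) hX.abs
  have h2 := variance_nonneg (|X|) μ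
  apply Real.le_sqrt_of_sq_le
  simp only [Pi.pow_apply, Pi.abs_apply, sq_abs] at h1
  linarith

/-- An `L¹` law of large numbers with explicit rate: the empirical mean of `g + h`, with `g` square
integrable and `h` nonnegative and integrable, is handled by a variance bound for `g` and the
triangle inequality for `h`. -/
lemma integral_abs_mean_sub_le {μ : Measure ℝ} [IsProbabilityMeasure μ] {q : ℕ} (hq : 0 < q)
    {g h : ℝ → ℝ} (hg : MemLp g 2 μ) (hh : Integrable h μ) (hh0 : ∀ x, 0 ≤ h x) :
    ∫ ξ, |(q : ℝ)⁻¹ * ∑ j, (g (ξ j) + h (ξ j)) - (∫ x, g x ∂μ + ∫ x, h x ∂μ)|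
        ∂(Measure.pi fun _ : Fin q => μ)
      ≤ Real.sqrt ((q : ℝ)⁻¹ * ∫ x, g x ^ 2 ∂μ) + 2 * ∫ x, h x ∂μ := by
  set P := Measure.pi fun _ : Fin q => μ
  have hq' : (q : ℝ) ≠ 0 := by positivity
  have hgi : Integrable g μ := hg.integrable one_le_two
  have hmp (j : Fin q) : MeasurePreserving (fun ξ : Fin q → ℝ => ξ j) P μ :=
    measurePreserving_eval _ j
  have hgj (j : Fin q) : MemLp (fun ξ : Fin q → ℝ => g (ξ j)) 2 P :=
    hg.comp_measurePreserving (hmp j)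
  have hhj (j : Fin q) : Integrable (fun ξ : Fin q → ℝ => h (ξ j)) P :=
    (hmp j).integrable_comp_of_integrable hh
  have hgint (j : Fin q) : ∫ ξ, g (ξ j) ∂P = ∫ x, g x ∂μ :=
    integral_comp_eval (μ := fun _ : Fin q => μ) hgi.aestronglyMeasurable
  have hhint (j : Fin q) : ∫ ξ, h (ξ j) ∂P = ∫ x, h x ∂μ :=
    integral_comp_eval (μ := fun _ : Fin q => μ) hh.aestronglyMeasurable
  set m := ∫ x, g x ∂μ
  have hsum : MemLp (fun ξ : Fin q → ℝ => (q : ℝ)⁻¹ * ∑ j, g (ξ j)) 2 P :=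
    (memLp_finsetSum _ fun j _ => hgj j).const_mul _
  have hX : MemLp (fun ξ : Fin q → ℝ => (q : ℝ)⁻¹ * ∑ j, g (ξ j) - m) 2 P :=
    hsum.sub (memLp_const m)
  have hmean : ∫ ξ, (q : ℝ)⁻¹ * ∑ j, g (ξ j) ∂P = m := by
    rw [integral_const_mul, integral_finsetSum _ fun j _ => (hgj j).integrable one_le_two]
    simp [hgint, hq']
  have hHmean : ∫ ξ, (q : ℝ)⁻¹ * ∑ j, h (ξ j) ∂P = ∫ x, h x ∂μ := by
    rw [integral_const_mul, integral_finsetSum _ fun j _ => hhj j]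
    simp [hhint, hq']
  have hHint : Integrable (fun ξ : Fin q → ℝ => (q : ℝ)⁻¹ * ∑ j, h (ξ j)) P :=
    (integrable_finsetSum _ fun j _ => hhj j).const_mul _
  have hvar : ∫ ξ, ((q : ℝ)⁻¹ * ∑ j, g (ξ j) - m) ^ 2 ∂P ≤ (q : ℝ)⁻¹ * ∫ x, g x ^ 2 ∂μ := by
    have e1 := variance_eq_integral (μ := P) hsum.aestronglyMeasurable.aemeasurable
    rw [hmean, variance_const_mul] at e1
    have e2 := variance_sum_pi (μ := fun _ : Fin q => μ) (X := fun _ => g) (fun _ => hg)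
    have e3 : (∑ j : Fin q, fun ξ : Fin q → ℝ => g (ξ j)) = fun ξ => ∑ j, g (ξ j) := by
      ext ξ; simp
    have e4 : variance g μ ≤ ∫ x, g x ^ 2 ∂μ := by
      simpa using variance_le_expectation_sq hg.aestronglyMeasurable
    rw [e3] at e2
    rw [← e1, e2]
    simp only [Finset.sum_const, Finset.card_univ, Fintype.card_fin, nsmul_eq_mul]
    calc ((q : ℝ)⁻¹) ^ 2 * (q * variance g μ) = (q : ℝ)⁻¹ * variance g μ := by field_simp
      _ ≤ _ := by gcongr
  calc _ ≤ ∫ ξ, (|(q : ℝ)⁻¹ * ∑ j, g (ξ j) - m| + (q : ℝ)⁻¹ * ∑ j, h (ξ j)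
            + ∫ x, h x ∂μ) ∂P := by
        refine integral_mono_of_nonneg (ae_of_all _ fun _ => abs_nonneg _)
          (((hX.integrable one_le_two).abs.add hHint).add (integrable_const _))
          (ae_of_all _ fun ξ => ?_)
        have n1 : 0 ≤ (q : ℝ)⁻¹ * ∑ j, h (ξ j) :=
          mul_nonneg (by positivity) (Finset.sum_nonneg fun j _ => hh0 _)
        have n2 : 0 ≤ ∫ x, h x ∂μ := integral_nonneg hh0
        simp only [Finset.sum_add_distrib, mul_add]
        have a1 := le_abs_self ((q : ℝ)⁻¹ * ∑ j, g (ξ j) - m)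
        have a2 := neg_abs_le ((q : ℝ)⁻¹ * ∑ j, g (ξ j) - m)
        rw [abs_le]
        constructor <;> linarith
    _ = ∫ ξ, |(q : ℝ)⁻¹ * ∑ j, g (ξ j) - m| ∂P + 2 * ∫ x, h x ∂μ := by
        have hsplit : Integrable (fun ξ : Fin q → ℝ =>
            |(q : ℝ)⁻¹ * ∑ j, g (ξ j) - m| + (q : ℝ)⁻¹ * ∑ j, h (ξ j)) P :=
          (hX.integrable one_le_two).abs.add hHint
        rw [integral_add hsplit (integrable_const _),
          integral_add (hX.integrable one_le_two).abs hHint, hHmean]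
        simp only [integral_const, probReal_univ, one_smul]
        ring
    _ ≤ _ := by
        gcongr
        exact (integral_abs_le_sqrt hX).trans (Real.sqrt_le_sqrt hvar)

lemma integrable_exp_affine (b c : ℝ) :
    Integrable (fun x => Real.exp (b * x + c)) (gaussianReal 0 1) := by
  simp_rw [Real.exp_add]
  exact (integrable_exp_mul_gaussianReal b).mul_const _

lemma integral_exp_affine (b c : ℝ) :
    ∫ x, Real.exp (b * x + c) ∂(gaussianReal 0 1) = Real.exp (b ^ 2 / 2 + c) := by
  have h := congrFun (mgf_id_gaussianReal (μ := 0) (v := 1)) b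
  simp only [mgf, id] at h
  simp_rw [Real.exp_add]
  rw [integral_mul_const, h]
  simp

/-- The quantitative bound, with truncation at `t = √(2 log q)`. -/
lemma integral_abs_mean_exp_sub_one_le {q : ℕ} (hq : 0 < q) {a t : ℝ}
    (ht : t ^ 2 = 2 * Real.log q) (hat : a ≤ t) (hta : t ≤ 2 * a) :
    ∫ ξ, |(q : ℝ)⁻¹ * ∑ j, Real.exp (a * ξ j - a ^ 2 / 2) - 1|
        ∂(Measure.pi fun _ : Fin q => gaussianReal 0 1)
      ≤ 3 * Real.exp (-(t - a) ^ 2 / 2) := by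
  set μ := gaussianReal 0 1
  set f : ℝ → ℝ := fun x => Real.exp (a * x + -(a ^ 2 / 2)) with hf
  set g : ℝ → ℝ := (Set.Iic t).indicator f with hg
  set h : ℝ → ℝ := (Set.Ioi t).indicator f with hh
  have hgh (x : ℝ) : g x + h x = f x := by
    simp only [hg, hh, Set.indicator, Set.mem_Iic, Set.mem_Ioi]
    split_ifs <;> linarith
  have hfi : Integrable f μ := integrable_exp_affine _ _
  have hf1 : ∫ x, f x ∂μ = 1 := by
    rw [hf, integral_exp_affine]; simp
  have hhi : Integrable h μ := hfi.indicator measurableSet_Ioi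
  have hgi : Integrable g μ := hfi.indicator measurableSet_Iic
  have hf2 : MemLp f 2 μ := by
    rw [memLp_two_iff_integrable_sq hfi.aestronglyMeasurable]
    refine (integrable_exp_affine (2 * a) (-(a ^ 2))).congr (ae_of_all _ fun x => ?_)
    simp only [hf, ← Real.exp_nat_mul]
    congr 1
    push_cast
    ring
  have hg2 : MemLp g 2 μ := hf2.indicator measurableSet_Iic
  -- On `x > t`, tilt by `exp ((t - a) (x - t)) ≥ 1`.
  have hhb : ∫ x, h x ∂μ ≤ Real.exp (-(t - a) ^ 2 / 2) := by
    calc _ ≤ ∫ x, Real.exp (t * x + (-(a ^ 2 / 2) - (t - a) * t)) ∂μ := by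
          refine integral_mono hhi (integrable_exp_affine _ _) fun x => ?_
          simp only [hh, Set.indicator, Set.mem_Ioi]
          split_ifs with hx
          · exact Real.exp_le_exp.2 (by nlinarith)
          · positivity
      _ = _ := by
          rw [integral_exp_affine]; congr 1; ring
  -- On `x ≤ t`, tilt by `exp ((2 a - t) (t - x)) ≥ 1`.
  have hgb : (q : ℝ)⁻¹ * ∫ x, g x ^ 2 ∂μ ≤ Real.exp (-(t - a) ^ 2 / 2) ^ 2 := by
    have hqe : (q : ℝ)⁻¹ = Real.exp (-(t ^ 2 / 2)) := by
      rw [ht, Real.exp_neg, mul_div_cancel_left₀ _ two_ne_zero, Real.exp_log (by positivity)]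
    calc _ ≤ (q : ℝ)⁻¹ * ∫ x, Real.exp (t * x + (-(a ^ 2) + (2 * a - t) * t)) ∂μ := by
          refine mul_le_mul_of_nonneg_left ?_ (by positivity)
          refine integral_mono hg2.integrable_sq (integrable_exp_affine _ _) fun x => ?_
          simp only [hg, Set.indicator, Set.mem_Iic]
          split_ifs with hx
          · simp only [hf, ← Real.exp_nat_mul]
            exact Real.exp_le_exp.2 (by push_cast; nlinarith)
          · simp only [ne_eq, OfNat.ofNat_ne_zero, not_false_eq_true, zero_pow]; positivity
      _ = _ := by
          rw [integral_exp_affine, hqe, ← Real.exp_add, ← Real.exp_nat_mul]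
          congr 1; push_cast; ring
  have key := integral_abs_mean_sub_le hq hg2 hhi fun x =>
    Set.indicator_nonneg (fun y _ => (Real.exp_pos _).le) x
  have hs := (Real.sqrt_le_sqrt hgb).trans_eq (Real.sqrt_sq (Real.exp_pos _).le)
  rw [← integral_add hgi hhi] at key
  simp only [hgh, hf1] at key
  simp only [sub_eq_add_neg (a * _)]
  refine key.trans ?_
  linarith

/-- Lemma 5.1, second part: if `p_n → ∞`, `ε_n > 0`, `ε_n → 0` and
`ε_n √(log p_n) → ∞`, then with `r̲_n = (1-ε_n)√(2 (log p_n)/n)`,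
`E|p_n⁻¹ Σ_j exp(√n r̲_n ξ_j - n r̲_n²/2) - 1| → 0`, `ξ_j` i.i.d. standard normal. -/
theorem statement8 :
    ∀ p : ℕ → ℕ, Tendsto (fun n => (p n : ℝ)) atTop atTop →
    ∀ ε : ℕ → ℝ, (∀ n, 0 < ε n) → Tendsto ε atTop (nhds 0) →
    Tendsto (fun n => ε n * Real.sqrt (Real.log (p n))) atTop atTop →
    Tendsto (fun n =>
        ∫ ξ, |(p n : ℝ)⁻¹ * ∑ j,
              Real.exp (Real.sqrt n * ((1 - ε n) * Real.sqrt (2 * Real.log (p n) / n)) * ξ j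
                - n * ((1 - ε n) * Real.sqrt (2 * Real.log (p n) / n)) ^ 2 / 2) - 1|
          ∂(Measure.pi fun _ : Fin (p n) => gaussianReal 0 1))
      atTop (nhds 0) := by
  intro p hp ε hε hε0 hεp
  -- The bound of `integral_abs_mean_exp_sub_one_le`, using `(t - a)² / 2 = (ε √(log p))²`.
  have hlim : Tendsto (fun n => 3 * Real.exp (-(ε n * Real.sqrt (Real.log (p n))) ^ 2))
      atTop (nhds 0) := by
    have := (Real.tendsto_exp_neg_atTop_nhds_zero.comp
      ((tendsto_pow_atTop two_ne_zero).comp hεp)).const_mul 3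
    simpa using this
  refine squeeze_zero' (Eventually.of_forall fun n => integral_nonneg fun _ => abs_nonneg _)
    ?_ hlim
  filter_upwards [eventually_gt_atTop 0, hp.eventually_ge_atTop 1,
    hε0.eventually (gt_mem_nhds (show (0 : ℝ) < 1 / 2 by norm_num))] with n hn hpn hεn
  have hL : 0 ≤ Real.log (p n) := Real.log_nonneg hpn
  have hn' : (0 : ℝ) < n := by exact_mod_cast hn
  set t := Real.sqrt (2 * Real.log (p n)) with ht
  have ht0 : 0 ≤ t := Real.sqrt_nonneg _
  have ht2 : t ^ 2 = 2 * Real.log (p n) := Real.sq_sqrt (by positivity)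
  have hr : Real.sqrt (2 * Real.log (p n) / n) = t / Real.sqrt n := Real.sqrt_div (by positivity) _
  have hsn : 0 < Real.sqrt n := Real.sqrt_pos.2 hn'
  have hsn2 : Real.sqrt n ^ 2 = n := Real.sq_sqrt hn'.le
  have e1 : Real.sqrt n * ((1 - ε n) * Real.sqrt (2 * Real.log (p n) / n)) = (1 - ε n) * t := by
    rw [hr]; field_simp
  have e2 : n * ((1 - ε n) * Real.sqrt (2 * Real.log (p n) / n)) ^ 2 / 2
      = ((1 - ε n) * t) ^ 2 / 2 := by
    rw [← e1, mul_pow (Real.sqrt n), hsn2]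
  have key := integral_abs_mean_exp_sub_one_le (q := p n) (a := (1 - ε n) * t)
    (by exact_mod_cast hpn) ht2 (by nlinarith [hε n]) (by nlinarith)
  rw [e1, e2]
  refine key.trans_eq ?_
  congr 2
  rw [mul_pow, Real.sq_sqrt hL]
  linear_combination (-(ε n) ^ 2 / 2) * ht2

end ManyMoment
end
end

section
/- For every t ∈ ℝ and ε > 0, Pr(| max_{1≤j≤p} Y_j − t | ≤ ε) ≤ 4·ε·(√(2·log p) + 1). -/
/-!
Let `γ` be the standard normal law, `φ` its density, and `M` the maximum. The law of `M` has a
density `G` with respect to `γ` that is *nondecreasing* and bounded by `p`. Indeed, split according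
to the first index `j` at which the maximum is attained (`firstArgmax`). Given `Y_j = x`, this event
says that the residuals `Y_k - ρ_k Y_j`, `ρ_k = cov (Y_k, Y_j)`, lie below `(1 - ρ_k) x`. The
residuals are independent of `Y_j`, and `ρ_k ≤ 1` since all variances are `1`, so the conditional
probability `g_j x` is nondecreasing in `x` (`exists_conditional_density`). Then `G = ∑ j, g_j`.

The Lebesgue density `φ * G` of `M` is bounded by `√(2 log p) + 1`
(`monotone_mul_gaussianPDF_le`). For `x ≥ √(2 log p)` this follows from `G ≤ p` and
`φ x ≤ exp (-x² / 2) ≤ 1 / p`. For `x ≤ √(2 log p)`, monotonicity gives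
`G x * γ [x, ∞) ≤ P (M ≥ x) ≤ 1`, and the hazard rate `φ x / γ [x, ∞)` is at most
`√(2 log p) + 1` (`gaussianPDF_le_mul_tail`). Integrating over the interval `[t - ε, t + ε]` yields
the claim, with the constant `2` in place of `4`.
-/

open MeasureTheory ProbabilityTheory
open scoped ENNReal NNReal BigOperators

noncomputable section

namespace ManyMoment

lemma gaussianPDFReal_std (x : ℝ) :
    gaussianPDFReal 0 1 x = (√(2 * Real.pi))⁻¹ * Real.exp (-x ^ 2 / 2) := by
  simp [gaussianPDFReal]

lemma gaussianPDFReal_std_le (x : ℝ) : gaussianPDFReal 0 1 x ≤ Real.exp (-x ^ 2 / 2) := by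
  rw [gaussianPDFReal_std]
  refine mul_le_of_le_one_left (Real.exp_pos _).le (inv_le_one_of_one_le₀ ?_)
  rw [Real.one_le_sqrt]
  nlinarith [Real.pi_gt_three]

lemma hasDerivAt_gaussianPDFReal_std (x : ℝ) :
    HasDerivAt (gaussianPDFReal 0 1) (-x * gaussianPDFReal 0 1 x) x := by
  have h : gaussianPDFReal 0 1 = fun x => (√(2 * Real.pi))⁻¹ * Real.exp (-x ^ 2 / 2) :=
    funext gaussianPDFReal_std
  rw [h]
  have h1 : HasDerivAt (fun x : ℝ => -x ^ 2 / 2) (-x) x := by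
    refine (((hasDerivAt_pow 2 x).neg).div_const 2).congr_deriv ?_
    norm_num
    ring
  refine ((h1.exp).const_mul (√(2 * Real.pi))⁻¹).congr_deriv ?_
  ring

/-- Mills-type lower bound for the normal tail: the derivative of `-φ s / (s + 1)` is
`φ s * (s² + s + 1) / (s + 1)²`, which is at most `φ s` for `s ≥ 0`. -/
lemma gaussianPDFReal_div_le_tail {x : ℝ} (hx : 0 ≤ x) :
    gaussianPDFReal 0 1 x / (x + 1) ≤ ∫ s in Set.Ioi x, gaussianPDFReal 0 1 s := by
  set f : ℝ → ℝ := fun s => -(gaussianPDFReal 0 1 s / (s + 1)) with hf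
  set f' : ℝ → ℝ := fun s => gaussianPDFReal 0 1 s * ((s ^ 2 + s + 1) / (s + 1) ^ 2) with hf'
  have hderiv : ∀ s ∈ Set.Ici x, HasDerivAt f (f' s) s := by
    intro s hs
    have hs1 : s + 1 ≠ 0 := by have : x ≤ s := hs; linarith
    refine ((hasDerivAt_gaussianPDFReal_std s).div
      ((hasDerivAt_id s).add_const 1) hs1).neg.congr_deriv ?_
    simp only [hf', id]
    field_simp
    ring
  have hpos : ∀ s ∈ Set.Ioi x, 0 ≤ f' s := by
    intro s hs
    have : 0 ≤ s := hx.trans (le_of_lt hs)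
    have := gaussianPDFReal_nonneg 0 1 s
    positivity
  have hlim : Filter.Tendsto f Filter.atTop (nhds 0) := by
    have hb : Filter.Tendsto (fun s : ℝ => -(1 / (s + 1))) Filter.atTop (nhds 0) := by
      have := (Filter.tendsto_atTop_add_const_right Filter.atTop (1 : ℝ)
        Filter.tendsto_id).inv_tendsto_atTop.neg
      simpa using! this
    refine tendsto_of_tendsto_of_tendsto_of_le_of_le' hb tendsto_const_nhds ?_ ?_
    · filter_upwards [Filter.eventually_ge_atTop 0] with s hs
      have h1 : gaussianPDFReal 0 1 s ≤ 1 :=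
        (gaussianPDFReal_std_le s).trans (Real.exp_le_one_iff.2 (by nlinarith [sq_nonneg s]))
      simp only [hf]
      gcongr
    · filter_upwards [Filter.eventually_ge_atTop 0] with s hs
      have := gaussianPDFReal_nonneg 0 1 s
      simp only [hf, Left.neg_nonpos_iff]
      positivity
  have hint := integral_Ioi_of_hasDerivAt_of_nonneg' hderiv hpos hlim
  have hii := integrableOn_Ioi_deriv_of_nonneg' hderiv hpos hlim
  have : gaussianPDFReal 0 1 x / (x + 1) = ∫ s in Set.Ioi x, f' s := by
    rw [hint]; simp [hf]
  rw [this]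
  refine setIntegral_mono_on hii (integrable_gaussianPDFReal 0 1).integrableOn
    measurableSet_Ioi fun s hs => ?_
  have hs0 : 0 ≤ s := hx.trans (le_of_lt hs)
  refine mul_le_of_le_one_right (gaussianPDFReal_nonneg 0 1 s) ?_
  rw [div_le_one (by positivity)]
  nlinarith

/-- The hazard rate `φ x / γ [x, ∞)` of the standard normal law `γ` is at most `x + 1` for `x ≥ 0`,
and at most `1` for `x ≤ 0`; hence it is at most `a + 1` on `(-∞, a]` when `a ≥ 0`. -/
lemma gaussianPDF_le_mul_tail {x a : ℝ} (ha : 0 ≤ a) (hxa : x ≤ a) :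
    gaussianPDF 0 1 x ≤ ENNReal.ofReal (a + 1) * gaussianReal 0 1 (Set.Ici x) := by
  have key : ∀ z : ℝ, 0 ≤ z → z ≤ a → x ≤ z →
      gaussianPDFReal 0 1 x ≤ gaussianPDFReal 0 1 z →
      gaussianPDF 0 1 x ≤ ENNReal.ofReal (a + 1) * gaussianReal 0 1 (Set.Ici x) := by
    intro z hz hza hxz hpdf
    have h := gaussianPDFReal_div_le_tail hz
    rw [div_le_iff₀ (by linarith)] at h
    have hnn : 0 ≤ ∫ s in Set.Ioi z, gaussianPDFReal 0 1 s :=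
      integral_nonneg fun s => gaussianPDFReal_nonneg 0 1 s
    calc gaussianPDF 0 1 x ≤ ENNReal.ofReal ((a + 1) * ∫ s in Set.Ioi z, gaussianPDFReal 0 1 s) := by
          refine ENNReal.ofReal_le_ofReal (hpdf.trans (h.trans ?_))
          nlinarith
      _ = ENNReal.ofReal (a + 1) * gaussianReal 0 1 (Set.Ioi z) := by
          rw [ENNReal.ofReal_mul (by linarith), gaussianReal_apply_eq_integral 0 one_ne_zero]
      _ ≤ _ := by
          gcongr
          exact fun s hs => hxz.trans (le_of_lt hs)
  rcases le_total 0 x with hx | hx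
  · exact key x hx hxa le_rfl le_rfl
  · refine key 0 le_rfl ha hx ?_
    rw [gaussianPDFReal_std, gaussianPDFReal_std]
    have h0 : -x ^ 2 / 2 ≤ -(0 : ℝ) ^ 2 / 2 := by nlinarith [sq_nonneg x]
    exact mul_le_mul_of_nonneg_left (Real.exp_le_exp.2 h0) (by positivity)

/-- A density `G` with respect to the standard normal law that is nondecreasing, bounded by `p`, and
of total mass at most `1`, gives a Lebesgue density `φ * G` bounded by `√(2 log p) + 1`. -/
lemma monotone_mul_gaussianPDF_le {p : ℕ} (hp : 1 ≤ p) {G : ℝ → ℝ≥0∞} (hG : Monotone G)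
    (hGp : ∀ x, G x ≤ p) (hG1 : ∫⁻ x, G x ∂(gaussianReal 0 1) ≤ 1) (x : ℝ) :
    gaussianPDF 0 1 x * G x ≤ ENNReal.ofReal (√(2 * Real.log p) + 1) := by
  have hp1 : (1 : ℝ) ≤ p := by exact_mod_cast hp
  have hlog : 0 ≤ Real.log p := Real.log_nonneg hp1
  set a := √(2 * Real.log p) with ha
  have ha0 : 0 ≤ a := Real.sqrt_nonneg _
  have ha2 : a ^ 2 = 2 * Real.log p := Real.sq_sqrt (by positivity)
  rcases le_total x a with hxa | hxa
  · -- Below the threshold, monotonicity turns the total mass into a bound on `G x * γ [x, ∞)`.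
    calc gaussianPDF 0 1 x * G x
        ≤ ENNReal.ofReal (a + 1) * gaussianReal 0 1 (Set.Ici x) * G x := by
          gcongr; exact gaussianPDF_le_mul_tail ha0 hxa
      _ = ENNReal.ofReal (a + 1) * ∫⁻ _ in Set.Ici x, G x ∂(gaussianReal 0 1) := by
          rw [setLIntegral_const]; ring
      _ ≤ ENNReal.ofReal (a + 1) * ∫⁻ s in Set.Ici x, G s ∂(gaussianReal 0 1) := by
          gcongr 1
          exact setLIntegral_mono' measurableSet_Ici fun s hs => hG hs
      _ ≤ ENNReal.ofReal (a + 1) * 1 := by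
          gcongr; exact (setLIntegral_le_lintegral _ _).trans hG1
      _ = _ := mul_one _
  · -- Above the threshold, `φ x ≤ exp (-x² / 2) ≤ 1 / p`.
    have h1 : gaussianPDFReal 0 1 x ≤ (p : ℝ)⁻¹ := by
      refine (gaussianPDFReal_std_le x).trans ?_
      calc Real.exp (-x ^ 2 / 2) ≤ Real.exp (-Real.log p) := by
            gcongr
            nlinarith
        _ = _ := by rw [Real.exp_neg, Real.exp_log (by linarith)]
    calc gaussianPDF 0 1 x * G x ≤ ENNReal.ofReal ((p : ℝ)⁻¹) * p := by
          gcongr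
          · exact ENNReal.ofReal_le_ofReal h1
          · exact hGp x
      _ = ENNReal.ofReal 1 := by
          rw [← ENNReal.ofReal_natCast, ← ENNReal.ofReal_mul (by positivity),
            inv_mul_cancel₀ (by linarith)]
      _ ≤ _ := ENNReal.ofReal_le_ofReal (by linarith)

lemma isGaussian_of_linear {p : ℕ} {ν : Measure (Fin p → ℝ)}
    (h : ∀ a : Fin p → ℝ, ∃ v : ℝ≥0,
      Measure.map (fun y => ∑ j, a j * y j) ν = gaussianReal 0 v) : IsGaussian ν := by
  refine isGaussian_of_map_eq_gaussianReal fun L => ?_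
  obtain ⟨v, hv⟩ := h fun j => L (Pi.single j 1)
  refine ⟨0, v, ?_⟩
  rw [← hv]
  congr 1
  ext y
  have hy : y = ∑ j, y j • (Pi.single j (1 : ℝ) : Fin p → ℝ) := by
    ext k
    simp [Finset.sum_apply, Pi.single_apply]
  conv_lhs => rw [hy]
  simp [map_sum, mul_comm]

/-- The vectors whose maximum is attained at the `j`-th coordinate and at no earlier one. Taking the
first maximizer makes these sets disjoint even when coordinates coincide almost surely. -/
def firstArgmax {p : ℕ} (j : Fin p) : Set (Fin p → ℝ) :=
  {y | ∀ k, y k ≤ y j ∧ (k < j → y k < y j)}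

/-- Given `Y_j = x`, the `j`-th coordinate is the first maximal one with a probability `g x` that
is nondecreasing in `x`. With `ρ_k = cov (Y_k, Y_j)`, the residuals `Y_k - ρ_k Y_j` are
independent of `Y_j`, and the event reads `Y_k - ρ_k Y_j ≤ (1 - ρ_k) x` (or `<`) for all `k`,
where `1 - ρ_k ≥ 0` because all variances are `1`. -/
lemma exists_conditional_density {p : ℕ} {ν : Measure (Fin p → ℝ)} [IsGaussian ν]
    (hstd : ∀ j, Measure.map (fun y => y j) ν = gaussianReal 0 1) (j : Fin p) :
    ∃ g : ℝ → ℝ≥0∞, Monotone g ∧ (∀ x, g x ≤ 1) ∧ ∀ B : Set ℝ, MeasurableSet B →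
      ν (firstArgmax j ∩ {y | y j ∈ B}) = ∫⁻ x in B, g x ∂(gaussianReal 0 1) := by
  have hid : HasGaussianLaw (fun y : Fin p → ℝ => y) ν := IsGaussian.hasGaussianLaw_id
  have hL2 : ∀ k, MemLp (fun y : Fin p → ℝ => y k) 2 ν := fun k => (hid.eval k).memLp_two
  have hvar : ∀ k, Var[fun y : Fin p → ℝ => y k; ν] = 1 := by
    intro k
    have h := variance_id_map (μ := ν) (X := fun y : Fin p → ℝ => y k)
      (measurable_pi_apply k).aemeasurable
    rw [← h, hstd k, variance_id_gaussianReal]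
    simp
  set ρ : Fin p → ℝ := fun k => cov[fun y => y k, fun y => y j; ν] with hρ
  have hρ1 : ∀ k, ρ k ≤ 1 := by
    intro k
    have h := variance_nonneg (fun y : Fin p → ℝ => y k - y j) ν
    rw [variance_fun_sub (hL2 k) (hL2 j), hvar, hvar] at h
    simp only [hρ]
    linarith
  set V : (Fin p → ℝ) → (Fin p → ℝ) := fun y k => y k - ρ k * y j with hV
  have hVm : Measurable V := by fun_prop
  have hind : IndepFun (fun y : Fin p → ℝ => y j) V ν := by
    let L : (Fin p → ℝ) →L[ℝ] (Unit → ℝ) × (Fin p → ℝ) :=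
      (ContinuousLinearMap.pi fun _ => ContinuousLinearMap.proj j).prod
        (ContinuousLinearMap.pi fun k =>
          ContinuousLinearMap.proj k - ρ k • ContinuousLinearMap.proj j)
    have hg : HasGaussianLaw (fun y : Fin p → ℝ =>
        ((fun _ : Unit => y j), fun k => y k - ρ k * y j)) ν := hid.map_fun L
    have h := hg.indepFun_of_covariance_eval (X := fun (_ : Unit) (y : Fin p → ℝ) => y j)
      (Y := fun k (y : Fin p → ℝ) => y k - ρ k * y j) fun _ k => by
        rw [covariance_fun_sub_right (hL2 j) (hL2 k) ((hL2 j).const_mul _),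
          covariance_const_mul_right, covariance_self (measurable_pi_apply j).aemeasurable,
          hvar, covariance_comm]
        simp [hρ]
    exact h.comp (φ := fun u : Unit → ℝ => u ()) (measurable_pi_apply ()) measurable_id
  have hprod := (indepFun_iff_map_prod_eq_prod_map_map
    (measurable_pi_apply j).aemeasurable hVm.aemeasurable).1 hind
  rw [hstd j] at hprod
  have : IsProbabilityMeasure (ν.map V) := Measure.isProbabilityMeasure_map hVm.aemeasurable
  let T : Set (ℝ × (Fin p → ℝ)) :=
    {z | ∀ k, z.2 k ≤ (1 - ρ k) * z.1 ∧ (k < j → z.2 k < (1 - ρ k) * z.1)}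
  have hT : MeasurableSet T := by
    have : T = ⋂ k, ({z | z.2 k ≤ (1 - ρ k) * z.1} ∩
        {z | k < j → z.2 k < (1 - ρ k) * z.1}) := by
      ext z; simp [T]
    rw [this]
    refine MeasurableSet.iInter fun k => ?_
    refine (measurableSet_le (by fun_prop) (by fun_prop)).inter ?_
    by_cases hk : k < j
    · simp only [hk, forall_const]
      exact measurableSet_lt (by fun_prop) (by fun_prop)
    · simp [hk]
  refine ⟨fun x => ν.map V (Prod.mk x ⁻¹' T), ?_, fun x => prob_le_one, ?_⟩
  · intro x x' hxx'
    refine measure_mono fun v hv k => ?_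
    have hle : (1 - ρ k) * x ≤ (1 - ρ k) * x' :=
      mul_le_mul_of_nonneg_left hxx' (by linarith [hρ1 k])
    exact ⟨(hv k).1.trans hle, fun hk => ((hv k).2 hk).trans_le hle⟩
  · intro B hB
    have hpre : firstArgmax j ∩ {y | y j ∈ B} =
        (fun y : Fin p → ℝ => (y j, V y)) ⁻¹' (T ∩ Prod.fst ⁻¹' B) := by
      ext y
      simp only [firstArgmax, Set.mem_inter_iff, Set.mem_ofPred_eq, Set.mem_preimage, T, hV]
      refine and_congr_left fun _ => forall_congr' fun k => ?_
      constructor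
      · rintro ⟨h1, h2⟩
        exact ⟨by linarith, fun hk => by linarith [h2 hk]⟩
      · rintro ⟨h1, h2⟩
        exact ⟨by linarith, fun hk => by linarith [h2 hk]⟩
    have hTB : MeasurableSet (T ∩ Prod.fst ⁻¹' B) := hT.inter (measurable_fst hB)
    rw [hpre, ← Measure.map_apply ((measurable_pi_apply j).prodMk hVm) hTB, hprod,
      Measure.prod_apply hTB, ← lintegral_indicator hB]
    refine lintegral_congr fun x => ?_
    by_cases hx : x ∈ B
    · rw [Set.indicator_of_mem hx]
      congr 1
      ext v
      simp [hx]
    · rw [Set.indicator_of_notMem hx]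
      convert measure_empty (μ := ν.map V)
      ext v
      simp [hx]

lemma exists_mem_firstArgmax {p : ℕ} (hp : 0 < p) (y : Fin p → ℝ) :
    ∃ j, y ∈ firstArgmax j ∧ ⨆ k, y k = y j := by
  classical
  have : Nonempty (Fin p) := ⟨⟨0, hp⟩⟩
  obtain ⟨i, hi⟩ := Finite.exists_max y
  let S : Finset (Fin p) := Finset.univ.filter fun k => ∀ l, y l ≤ y k
  have hS : S.Nonempty := ⟨i, by simpa [S] using hi⟩
  have hmem : ∀ l, y l ≤ y (S.min' hS) := by
    have := S.min'_mem hS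
    simpa [S] using this
  refine ⟨S.min' hS, fun k => ⟨hmem k, fun hk => ?_⟩, ?_⟩
  · by_contra! hcon
    have hkS : k ∈ S := by
      simp only [S, Finset.mem_filter, Finset.mem_univ, true_and]
      exact fun l => (hmem l).trans hcon
    exact absurd (S.min'_le k hkS) (not_le.2 hk)
  · exact le_antisymm (ciSup_le hmem) (le_ciSup (Set.finite_range y).bddAbove _)

lemma pairwise_disjoint_firstArgmax {p : ℕ} :
    Pairwise (Function.onFun Disjoint (firstArgmax (p := p))) := by
  intro i j hij
  rw [Function.onFun, Set.disjoint_left]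
  intro y hi hj
  rcases lt_or_gt_of_ne hij with h | h
  · exact absurd ((hj i).2 h) (not_lt.2 (hi j).1)
  · exact absurd ((hi j).2 h) (not_lt.2 (hj i).1)

lemma measurableSet_firstArgmax {p : ℕ} (j : Fin p) : MeasurableSet (firstArgmax j) := by
  have : firstArgmax j = ⋂ k, ({y | y k ≤ y j} ∩ {y | k < j → y k < y j}) := by
    ext y; simp [firstArgmax]
  rw [this]
  refine MeasurableSet.iInter fun k => ?_
  refine (measurableSet_le (by fun_prop) (by fun_prop)).inter ?_
  by_cases hk : k < j
  · simp only [hk, forall_const]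
    exact measurableSet_lt (by fun_prop) (by fun_prop)
  · simp [hk]

/-- if `(Y_1,…,Y_p)` is a Gaussian vector with `E Y_j = 0`, `E Y_j² = 1`
(arbitrary correlation), then for every `t ∈ ℝ` and `ε > 0`,
`Pr(|max_j Y_j - t| ≤ ε) ≤ 4 ε (√(2 log p) + 1)`. -/
theorem statement15 :
    ∀ (p : ℕ), 2 ≤ p →
    ∀ ν : Measure (Fin p → ℝ), IsProbabilityMeasure ν →
    (∀ a : Fin p → ℝ, ∃ v : ℝ≥0,
      Measure.map (fun y => ∑ j, a j * y j) ν = gaussianReal 0 v) →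
    (∀ j, Measure.map (fun y => y j) ν = gaussianReal 0 1) →
    ∀ t ε : ℝ, 0 < ε →
    (ν {y | |(⨆ j, y j) - t| ≤ ε}).toReal ≤ 4 * ε * (Real.sqrt (2 * Real.log p) + 1) := by
  intro p hp ν hν hlin hstd t ε hε
  have : IsGaussian ν := isGaussian_of_linear hlin
  choose g hmono hle hint using exists_conditional_density hstd
  -- `G` is the density of the law of the maximum with respect to the standard normal law.
  let G : ℝ → ℝ≥0∞ := fun x => ∑ j, g j x
  have hG : Monotone G := fun x x' h => Finset.sum_le_sum fun j _ => hmono j h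
  have hGp : ∀ x, G x ≤ p := fun x =>
    (Finset.sum_le_sum fun j _ => hle j x).trans (by simp)
  have hsum : ∀ B : Set ℝ, MeasurableSet B →
      ∫⁻ x in B, G x ∂(gaussianReal 0 1) = ∑ j, ν (firstArgmax j ∩ {y | y j ∈ B}) := by
    intro B hB
    rw [lintegral_finsetSum _ fun j _ => (hmono j).measurable]
    exact Finset.sum_congr rfl fun j _ => (hint j B hB).symm
  have hG1 : ∫⁻ x, G x ∂(gaussianReal 0 1) ≤ 1 := by
    have h := hsum Set.univ MeasurableSet.univ
    rw [Measure.restrict_univ] at h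
    simp only [Set.mem_univ, Set.ofPred_true, Set.inter_univ] at h
    rw [h, ← tsum_fintype (L := .unconditional _),
      ← measure_iUnion pairwise_disjoint_firstArgmax measurableSet_firstArgmax]
    exact prob_le_one
  set C : ℝ := √(2 * Real.log p) + 1 with hC
  have hC0 : 0 ≤ C := by positivity
  have hbound : ν {y | |(⨆ j, y j) - t| ≤ ε} ≤ ENNReal.ofReal (C * (2 * ε)) := by
    calc ν {y | |(⨆ j, y j) - t| ≤ ε}
        ≤ ν (⋃ j, (firstArgmax j ∩ {y | y j ∈ Set.Icc (t - ε) (t + ε)})) := by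
          refine measure_mono fun y hy => ?_
          obtain ⟨j, hj, hmax⟩ := exists_mem_firstArgmax (by omega) y
          rw [Set.mem_ofPred_eq, hmax, abs_le] at hy
          exact Set.mem_iUnion.2 ⟨j, hj, by linarith [hy.1], by linarith [hy.2]⟩
      _ ≤ ∑ j, ν (firstArgmax j ∩ {y | y j ∈ Set.Icc (t - ε) (t + ε)}) :=
          measure_iUnion_fintype_le _ _
      _ = ∫⁻ x in Set.Icc (t - ε) (t + ε), G x ∂(gaussianReal 0 1) :=
          (hsum _ measurableSet_Icc).symm
      _ = ∫⁻ x in Set.Icc (t - ε) (t + ε), gaussianPDF 0 1 x * G x := by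
          rw [gaussianReal_of_var_ne_zero 0 one_ne_zero,
            setLIntegral_withDensity_eq_setLIntegral_mul _ (measurable_gaussianPDF 0 1)
              hG.measurable measurableSet_Icc]
          rfl
      _ ≤ ∫⁻ _ in Set.Icc (t - ε) (t + ε), ENNReal.ofReal C :=
          lintegral_mono fun x => monotone_mul_gaussianPDF_le (by omega) hG hGp hG1 x
      _ = ENNReal.ofReal (C * (2 * ε)) := by
          rw [setLIntegral_const, Real.volume_Icc, ← ENNReal.ofReal_mul hC0]
          congr 1
          ring
  calc (ν {y | |(⨆ j, y j) - t| ≤ ε}).toReal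
      ≤ C * (2 * ε) := ENNReal.toReal_le_of_le_ofReal (by positivity) hbound
    _ ≤ 4 * ε * C := by nlinarith [mul_nonneg hε.le hC0]

end ManyMoment
end
end
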